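/- arXiv:1612.01951 — 2 statements merged into one kernel-verified Lean document; each statement's English description precedes it below -/
import Mathlib

section
/- Let r ∈ ℝ and F, K, T ∈ ℝ with F > 0, K > 0, T > 0, F ≠ K, and let f be the complex Black-Scholes call price. Then the singularity of f at σ = 0 is essential: there is no c ∈ ℂ such that f(σ) tends to c as σ → 0 within ℂ \ {0} (so the singularity is not removable), and ‖f(σ)‖ does not tend to +∞ as σ → 0 within ℂ \ {0} (so the singularity is not a pole). -/
/-!
On the real axis `Φ` is the usual normal distribution function, so `Φ(x) → 1` as `x → +∞`, by the
Gaussian integral. Put `L = log (F / K)`, which is nonzero because `F ≠ K`, and approach `0` along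
the real path `σ = (L / √T) u`, `u → 0⁺`. There `d±(σ) = u⁻¹ ± L u / 2 → +∞`, hence
`f(σ) → e^{-rT} (F - K)`. This finite limit already excludes a pole. Since `d±` is odd in `σ` and
`Φ(-z) = 1 - Φ(z)`, one has `f(-σ) = e^{-rT} (F - K) - f(σ)`, so along the opposite path `f → 0`.
The two limits differ, so `f` has no limit at `0`.
-/

open Complex intervalIntegral

/-- The analytic extension of the standard normal CDF to the complex plane:
`Φ(z) = 1/2 + (2π)^{-1/2} ∫_{t=0}^{1} z · exp(−(t·z)²/2) dt`. -/
noncomputable def Phi (z : ℂ) : ℂ :=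
  1 / 2 + ((Real.sqrt (2 * Real.pi))⁻¹ : ℂ) *
    ∫ t in (0:ℝ)..1, z * Complex.exp (-((t : ℂ) * z) ^ 2 / 2)


/-- `d₊(σ) = log(F/K)/(σ√T) + σ√T/2`. -/
noncomputable def dPlus (F K T : ℝ) (σ : ℂ) : ℂ :=
  (Real.log (F / K) : ℂ) / (σ * (Real.sqrt T : ℂ)) + σ * (Real.sqrt T : ℂ) / 2

/-- `d₋(σ) = log(F/K)/(σ√T) − σ√T/2`. -/
noncomputable def dMinus (F K T : ℝ) (σ : ℂ) : ℂ :=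
  (Real.log (F / K) : ℂ) / (σ * (Real.sqrt T : ℂ)) - σ * (Real.sqrt T : ℂ) / 2

/-- The complex Black-Scholes call price
`f(σ) = e^{−rT}·(F·Φ(d₊(σ)) − K·Φ(d₋(σ)))`. -/
noncomputable def BS (r F K T : ℝ) (σ : ℂ) : ℂ :=
  (Real.exp (-(r * T)) : ℂ) * ((F : ℂ) * Phi (dPlus F K T σ) - (K : ℂ) * Phi (dMinus F K T σ))

lemma Phi_neg (z : ℂ) : Phi (-z) = 1 - Phi z := by
  have h : (∫ t in (0:ℝ)..1, -z * Complex.exp (-((t : ℂ) * -z) ^ 2 / 2)) =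
      -∫ t in (0:ℝ)..1, z * Complex.exp (-((t : ℂ) * z) ^ 2 / 2) := by
    rw [← intervalIntegral.integral_neg]
    congr 1
    ext t
    rw [mul_neg, neg_sq, neg_mul]
  unfold Phi
  rw [h]
  ring

/-- On the real axis, the substitution `s = t x` turns the integral over `[0, 1]` into the usual
integral of the Gaussian density over `[0, x]`. -/
lemma Phi_ofReal (x : ℝ) : Phi (x : ℂ) =
    ((1 / 2 + (Real.sqrt (2 * Real.pi))⁻¹ *
      ∫ s in (0:ℝ)..x, Real.exp (-(1 / 2) * s ^ 2) : ℝ) : ℂ) := by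
  have h1 : (∫ t in (0:ℝ)..1, (x : ℂ) * Complex.exp (-((t : ℂ) * x) ^ 2 / 2)) =
      ∫ t in (0:ℝ)..1, ((x * Real.exp (-(1 / 2) * (t * x) ^ 2) : ℝ) : ℂ) := by
    congr 1
    ext t
    push_cast
    congr 2
    ring
  have h2 : (∫ t in (0:ℝ)..1, x * Real.exp (-(1 / 2) * (t * x) ^ 2)) =
      ∫ s in (0:ℝ)..x, Real.exp (-(1 / 2) * s ^ 2) := by
    rw [intervalIntegral.integral_const_mul,
      intervalIntegral.mul_integral_comp_mul_right (f := fun s => Real.exp (-(1 / 2) * s ^ 2))]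
    simp
  unfold Phi
  rw [h1, intervalIntegral.integral_ofReal, h2]
  push_cast
  rfl

open Filter in
lemma tendsto_Phi_atTop : Tendsto (fun x : ℝ => Phi (x : ℂ)) atTop (nhds 1) := by
  have hint : MeasureTheory.IntegrableOn (fun s : ℝ => Real.exp (-(1 / 2) * s ^ 2))
      (Set.Ioi 0) := (integrable_exp_neg_mul_sq (by norm_num)).integrableOn
  have h := MeasureTheory.intervalIntegral_tendsto_integral_Ioi 0 hint tendsto_id
  rw [integral_gaussian_Ioi] at h
  have h2 := (h.const_mul (Real.sqrt (2 * Real.pi))⁻¹).const_add (1 / 2)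
  have hpi : Real.sqrt (2 * Real.pi) ≠ 0 := by positivity
  have e : (1 / 2 + (Real.sqrt (2 * Real.pi))⁻¹ * (Real.sqrt (Real.pi / (1 / 2)) / 2) : ℝ) = 1 := by
    rw [show Real.pi / (1 / 2) = 2 * Real.pi by ring]
    field_simp
    norm_num
  rw [e] at h2
  have h3 := (Complex.continuous_ofReal.tendsto 1).comp h2
  rw [Complex.ofReal_one] at h3
  refine h3.congr fun x => ?_
  rw [Phi_ofReal]
  rfl

lemma BS_neg (r F K T : ℝ) (σ : ℂ) :
    BS r F K T (-σ) = (Real.exp (-(r * T)) : ℂ) * ((F : ℂ) - K) - BS r F K T σ := by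
  have hp : dPlus F K T (-σ) = -dPlus F K T σ := by
    unfold dPlus; rw [neg_mul, div_neg]; ring
  have hm : dMinus F K T (-σ) = -dMinus F K T σ := by
    unfold dMinus; rw [neg_mul, div_neg]; ring
  unfold BS
  rw [hp, hm, Phi_neg, Phi_neg]
  ring

open Filter in
lemma tendsto_inv_add_mul (a : ℝ) :
    Tendsto (fun u : ℝ => u⁻¹ + a * u) (nhdsWithin 0 (Set.Ioi 0)) atTop := by
  have h : Tendsto (fun u : ℝ => a * u) (nhdsWithin 0 (Set.Ioi 0)) (nhds (a * 0)) :=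
    ((continuous_const.mul continuous_id).tendsto 0).mono_left nhdsWithin_le_nhds
  exact tendsto_inv_nhdsGT_zero.atTop_add h

open Filter in
/-- The scaling `σ = (log (F / K) / √T) u` puts the leading term of `d±` in the form `u⁻¹`,
whatever the sign of `log (F / K)`. -/
lemma tendsto_BS_path (r F K T : ℝ) (hT : 0 < T) (hL : Real.log (F / K) ≠ 0) :
    Tendsto (fun u : ℝ => BS r F K T ((Real.log (F / K) / Real.sqrt T * u : ℝ) : ℂ))
      (nhdsWithin 0 (Set.Ioi 0)) (nhds ((Real.exp (-(r * T)) : ℂ) * ((F : ℂ) - K))) := by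
  have hs : Real.sqrt T ≠ 0 := (Real.sqrt_pos.2 hT).ne'
  set L := Real.log (F / K) with hLdef
  have hp := tendsto_Phi_atTop.comp (tendsto_inv_add_mul (L / 2))
  have hm := tendsto_Phi_atTop.comp (tendsto_inv_add_mul (-L / 2))
  have h := ((hp.const_mul (F : ℂ)).sub (hm.const_mul (K : ℂ))).const_mul
    (Real.exp (-(r * T)) : ℂ)
  rw [mul_one, mul_one] at h
  refine h.congr' ?_
  filter_upwards [self_mem_nhdsWithin] with u hu
  have hu0 : u ≠ 0 := ne_of_gt hu
  have ep : dPlus F K T ((L / Real.sqrt T * u : ℝ) : ℂ) = ((u⁻¹ + L / 2 * u : ℝ) : ℂ) := by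
    have : L / (L / Real.sqrt T * u * Real.sqrt T) + L / Real.sqrt T * u * Real.sqrt T / 2
        = u⁻¹ + L / 2 * u := by field_simp
    unfold dPlus
    rw [← this, ← hLdef]
    push_cast
    rfl
  have em : dMinus F K T ((L / Real.sqrt T * u : ℝ) : ℂ) = ((u⁻¹ + -L / 2 * u : ℝ) : ℂ) := by
    have : L / (L / Real.sqrt T * u * Real.sqrt T) - L / Real.sqrt T * u * Real.sqrt T / 2
        = u⁻¹ + -L / 2 * u := by field_simp; ring
    unfold dMinus
    rw [← this, ← hLdef]
    push_cast
    rfl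
  unfold BS
  rw [ep, em]
  rfl

open Filter in
/-- for `F ≠ K`, the singularity of the Black-Scholes price at `σ = 0` is
essential: `f` tends to no finite limit as `σ → 0` within `ℂ \ {0}` (not removable),
and `‖f(σ)‖` does not tend to `+∞` there (not a pole). -/
theorem BS_essential_singularity_at_zero (r F K T : ℝ)
    (hF : 0 < F) (hK : 0 < K) (hT : 0 < T) (hFK : F ≠ K) :
    (¬ ∃ c : ℂ, Tendsto (BS r F K T) (nhdsWithin 0 {(0 : ℂ)}ᶜ) (nhds c)) ∧
    ¬ Tendsto (fun σ : ℂ => ‖BS r F K T σ‖) (nhdsWithin 0 {(0 : ℂ)}ᶜ) atTop := by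
  have hL : Real.log (F / K) ≠ 0 := by
    refine Real.log_ne_zero_of_pos_of_ne_one (div_pos hF hK) fun h => hFK ?_
    rwa [div_eq_one_iff_eq hK.ne'] at h
  have ha : Real.log (F / K) / Real.sqrt T ≠ 0 := div_ne_zero hL (Real.sqrt_pos.2 hT).ne'
  have hlim := tendsto_BS_path r F K T hT hL
  set a := Real.log (F / K) / Real.sqrt T
  have hpath : Tendsto (fun u : ℝ => ((a * u : ℝ) : ℂ)) (nhdsWithin 0 (Set.Ioi 0))
      (nhdsWithin 0 {(0 : ℂ)}ᶜ) := by
    refine tendsto_nhdsWithin_iff.2 ⟨?_, ?_⟩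
    · have hc : Continuous fun u : ℝ => ((a * u : ℝ) : ℂ) := by fun_prop
      have := hc.tendsto 0
      rw [mul_zero, Complex.ofReal_zero] at this
      exact this.mono_left nhdsWithin_le_nhds
    · filter_upwards [self_mem_nhdsWithin] with u hu
      simpa using ⟨ha, ne_of_gt hu⟩
  have hpath' : Tendsto (fun u : ℝ => -((a * u : ℝ) : ℂ)) (nhdsWithin 0 (Set.Ioi 0))
      (nhdsWithin 0 {(0 : ℂ)}ᶜ) := by
    rw [tendsto_nhdsWithin_iff] at hpath ⊢
    refine ⟨by simpa using hpath.1.neg, ?_⟩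
    filter_upwards [hpath.2] with u hu
    simpa using hu
  constructor
  · rintro ⟨c, hc⟩
    have h1 := tendsto_nhds_unique (hc.comp hpath) hlim
    have h2 : Tendsto (fun u : ℝ => BS r F K T (-((a * u : ℝ) : ℂ)))
        (nhdsWithin 0 (Set.Ioi 0)) (nhds 0) := by
      simp_rw [BS_neg]
      simpa using hlim.const_sub ((Real.exp (-(r * T)) : ℂ) * ((F : ℂ) - K))
    have h3 := tendsto_nhds_unique (hc.comp hpath') h2
    rw [h3] at h1
    have hne : (Real.exp (-(r * T)) : ℂ) * ((F : ℂ) - K) ≠ 0 :=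
      mul_ne_zero (Complex.ofReal_ne_zero.2 (Real.exp_pos _).ne')
        (sub_ne_zero.2 fun h => hFK (Complex.ofReal_injective h))
    exact hne h1.symm
  · intro h
    exact not_tendsto_nhds_of_tendsto_atTop (h.comp hpath) _ hlim.norm
end

section
/- Let r ∈ ℝ and F, K, T ∈ ℝ with F > 0, K > 0, T > 0, F ≠ K, and let f be the complex Black-Scholes call price. Then for every ε > 0, the image f({σ ∈ ℂ : 0 < ‖σ‖ < ε}) is dense in ℂ (Casorati-Weierstrass behaviour at the essential singularity σ = 0). -/
/-!
The derivative of the call price is explicit. Since `Φ' (z) = (2π)^{-1/2} exp (-z²/2)` and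
`F exp (-d₊²/2) = K exp (-d₋²/2)`, one finds for `σ ≠ 0` the "vega"
`f' (σ) = e^{-rT} F √T (2π)^{-1/2} exp (-d₊(σ)²/2)`, and
`exp (-d₊²/2) = exp (-L²/(2Tσ²)) · exp (-L/2 - σ²T/8)` with `L = log (F/K) ≠ 0`.

If the image of some punctured disc stayed at distance at least `δ` from a point `w`, then
`(f - w)⁻¹` would be holomorphic and bounded there, so its singularity at `0` would be removable
and `f` would be meromorphic at `0` (`meromorphicAt_of_punctured_nhds_avoid_ball`). Then `f'`, and
hence `exp (-c/σ²)` with `c = L²/(2T) > 0`, would be meromorphic at `0`. But that function tends to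
`0` along the real axis and to infinity along the imaginary axis, whereas a meromorphic function
has a limit, finite or infinite, at every point (`not_meromorphicAt_exp_neg_div_sq`).
-/


open Complex intervalIntegral

open Filter Topology Set

/-- The entire function `exp (-w²/2)` has a global primitive `G`, and the integral defining `Phi z`
is `G z - G 0` by the fundamental theorem of calculus along the segment from `0` to `z`. -/
lemma hasDerivAt_Phi (z : ℂ) :
    HasDerivAt Phi (((Real.sqrt (2 * Real.pi))⁻¹ : ℂ) * Complex.exp (-z ^ 2 / 2)) z := by
  have hd : Differentiable ℂ (fun w : ℂ => Complex.exp (-w ^ 2 / 2)) := by fun_prop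
  obtain ⟨G, hG⟩ := hd.isExactOn_univ
  have key : ∀ w : ℂ, ∫ t in (0:ℝ)..1, w * Complex.exp (-((t : ℂ) * w) ^ 2 / 2) = G w - G 0 := by
    intro w
    have h1 : ∀ t : ℝ, HasDerivAt (fun t : ℝ => G ((t : ℂ) * w))
        (w * Complex.exp (-((t : ℂ) * w) ^ 2 / 2)) t := by
      intro t
      have h2 : HasDerivAt (fun t : ℝ => (t : ℂ) * w) w t := by
        simpa using (Complex.ofRealCLM.hasDerivAt (x := t)).mul_const w
      have h3 := (hG ((t : ℂ) * w) (mem_univ _)).scomp t h2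
      simpa [Function.comp_def] using h3
    rw [intervalIntegral.integral_eq_sub_of_hasDerivAt (fun t _ => h1 t)]
    · simp
    · exact Continuous.intervalIntegrable (by fun_prop) _ _
  have hPhi : Phi = fun w => 1 / 2 + ((Real.sqrt (2 * Real.pi))⁻¹ : ℂ) * (G w - G 0) := by
    funext w
    rw [Phi, key]
  rw [hPhi]
  exact (((hG z (mem_univ _)).sub_const _).const_mul _).const_add _

/-- The "vega": the identity `F exp (-d₊²/2) = K exp (-d₋²/2)` makes all terms of the derivative
cancel except the one coming from `d₊' - d₋' = √T`. -/
lemma hasDerivAt_BS (r F K T : ℝ) (hF : 0 < F) (hK : 0 < K) (hT : 0 < T) {σ : ℂ} (hσ : σ ≠ 0) :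
    HasDerivAt (BS r F K T)
      ((Real.exp (-(r * T)) : ℂ) * (F : ℂ) * ((Real.sqrt (2 * Real.pi))⁻¹ : ℂ) *
        (Real.sqrt T : ℂ) * Complex.exp (-(dPlus F K T σ) ^ 2 / 2)) σ := by
  have hs : (Real.sqrt T : ℂ) ≠ 0 := by
    exact_mod_cast (Real.sqrt_pos.2 hT).ne'
  set s : ℂ := (Real.sqrt T : ℂ) with hs_def
  set L : ℂ := (Real.log (F / K) : ℂ) with hL_def
  have h1 : HasDerivAt (fun x : ℂ => L / (x * s)) (-(L * s) / (σ * s) ^ 2) σ := by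
    have := (hasDerivAt_const σ L).div ((hasDerivAt_id σ).mul_const s) (mul_ne_zero hσ hs)
    exact this.congr_deriv (by simp)
  have h2 : HasDerivAt (fun x : ℂ => x * s / 2) (s / 2) σ := by
    simpa using ((hasDerivAt_id σ).mul_const s).div_const 2
  have hp : HasDerivAt (dPlus F K T) (-(L * s) / (σ * s) ^ 2 + s / 2) σ := h1.add h2
  have hm : HasDerivAt (dMinus F K T) (-(L * s) / (σ * s) ^ 2 - s / 2) σ := h1.sub h2
  have hsq : -(dMinus F K T σ) ^ 2 / 2 = -(dPlus F K T σ) ^ 2 / 2 + L := by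
    rw [dMinus, dPlus, ← hs_def, ← hL_def]
    field_simp
    ring
  have hexp : (K : ℂ) * Complex.exp (-(dMinus F K T σ) ^ 2 / 2)
      = F * Complex.exp (-(dPlus F K T σ) ^ 2 / 2) := by
    have hK' : (K : ℂ) ≠ 0 := by exact_mod_cast hK.ne'
    rw [hsq, Complex.exp_add, hL_def, ← Complex.ofReal_exp, Real.exp_log (div_pos hF hK)]
    push_cast
    field_simp
  have h := ((((hasDerivAt_Phi _).comp σ hp).const_mul (F : ℂ)).sub
    (((hasDerivAt_Phi _).comp σ hm).const_mul (K : ℂ))).const_mul (Real.exp (-(r * T)) : ℂ)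
  refine h.congr_deriv ?_
  linear_combination (-(Real.exp (-(r * T)) : ℂ)) * ((Real.sqrt (2 * Real.pi))⁻¹ : ℂ) *
    (-(L * s) / (σ * s) ^ 2 - s / 2) * hexp

/-- A meromorphic function has a limit in the Riemann sphere; here the limits along the real and the
imaginary axis are `0` and `∞`. -/
lemma not_meromorphicAt_exp_neg_div_sq {c : ℝ} (hc : 0 < c) :
    ¬ MeromorphicAt (fun z : ℂ => Complex.exp (-(c / z ^ 2))) 0 := by
  intro hm
  have hsq : Tendsto (fun x : ℝ => c / x ^ 2) (𝓝[>] 0) atTop := by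
    have h := (tendsto_pow_atTop (α := ℝ) two_ne_zero).comp (tendsto_inv_nhdsGT_zero (𝕜 := ℝ))
    refine (h.const_mul_atTop hc).congr fun x => ?_
    simp [div_eq_mul_inv]
  have hline : ∀ u : ℂ, u ≠ 0 → Tendsto (fun x : ℝ => (x : ℂ) * u) (𝓝[>] 0) (𝓝[≠] 0) := by
    intro u hu
    refine tendsto_nhdsWithin_iff.2 ⟨?_, ?_⟩
    · have : Continuous fun x : ℝ => (x : ℂ) * u := by fun_prop
      simpa using (this.tendsto 0).mono_left nhdsWithin_le_nhds
    · filter_upwards [self_mem_nhdsWithin] with x hx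
      exact mul_ne_zero (by exact_mod_cast (ne_of_gt hx)) hu
  have hre : Tendsto (fun x : ℝ => ‖Complex.exp (-(c / ((x : ℂ) * 1) ^ 2))‖) (𝓝[>] 0) (𝓝 0) := by
    refine (Real.tendsto_exp_neg_atTop_nhds_zero.comp hsq).congr fun x => ?_
    have : -((c : ℂ) / ((x : ℂ) * 1) ^ 2) = ((-(c / x ^ 2) : ℝ) : ℂ) := by push_cast; ring
    rw [this, Complex.norm_exp_ofReal]
    rfl
  have him : Tendsto (fun x : ℝ => ‖Complex.exp (-(c / ((x : ℂ) * I) ^ 2))‖) (𝓝[>] 0) atTop := by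
    refine (Real.tendsto_exp_atTop.comp hsq).congr fun x => ?_
    have : -((c : ℂ) / ((x : ℂ) * I) ^ 2) = ((c / x ^ 2 : ℝ) : ℂ) := by
      push_cast
      rw [mul_pow, I_sq, mul_neg_one, div_neg, neg_neg]
    rw [this, Complex.norm_exp_ofReal]
    rfl
  rcases lt_or_ge (meromorphicOrderAt (fun z : ℂ => Complex.exp (-(c / z ^ 2))) 0) 0 with ho | ho
  · have h := (tendsto_norm_cobounded_atTop.comp
      (tendsto_cobounded_of_meromorphicOrderAt_neg ho)).comp (hline 1 one_ne_zero)
    exact not_tendsto_nhds_of_tendsto_atTop h 0 hre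
  · obtain ⟨l, hl⟩ := tendsto_nhds_of_meromorphicOrderAt_nonneg hm ho
    exact not_tendsto_nhds_of_tendsto_atTop him _ (hl.comp (hline I I_ne_zero)).norm

/-- The Casorati-Weierstrass theorem in contrapositive form: a function holomorphic near `x`, except
perhaps at `x`, and whose values there keep a positive distance from `w`, is meromorphic at `x`,
because `(f - w)⁻¹` has a removable singularity. -/
lemma meromorphicAt_of_punctured_nhds_avoid_ball {f : ℂ → ℂ} {x w : ℂ} {δ : ℝ} (hδ : 0 < δ)
    (hd : ∀ᶠ z in 𝓝[≠] x, DifferentiableAt ℂ f z) (hb : ∀ᶠ z in 𝓝[≠] x, δ ≤ ‖f z - w‖) :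
    MeromorphicAt f x := by
  set g : ℂ → ℂ := fun z => (f z - w)⁻¹ with hg
  set s : Set ℂ := insert x {z | DifferentiableAt ℂ f z ∧ δ ≤ ‖f z - w‖}
  have hs : s ∈ 𝓝 x := insert_mem_nhds_iff.2 (hd.and hb)
  have hmem : ∀ z ∈ s \ {x}, DifferentiableAt ℂ f z ∧ δ ≤ ‖f z - w‖ :=
    fun z hz => hz.1.resolve_left hz.2
  have hgd : DifferentiableOn ℂ g (s \ {x}) := fun z hz =>
    (((hmem z hz).1.sub_const w).inv
      (norm_pos_iff.1 (hδ.trans_le (hmem z hz).2))).differentiableWithinAt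
  have hgb : BddAbove (norm ∘ g '' (s \ {x})) := by
    refine ⟨δ⁻¹, ?_⟩
    rintro _ ⟨z, hz, rfl⟩
    simpa [hg] using inv_anti₀ hδ (hmem z hz).2
  have hupd := Complex.differentiableOn_update_limUnder_of_bddAbove hs hgd hgb
  have hgm : MeromorphicAt g x := by
    refine (hupd.analyticAt hs).meromorphicAt.congr ?_
    filter_upwards [self_mem_nhdsWithin] with z hz
    exact Function.update_of_ne hz _ _
  have hf : f = g⁻¹ + fun _ => w := by
    funext z
    simp [hg]
  rw [hf]
  exact hgm.inv.add (MeromorphicAt.const w x)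

/-- Casorati-Weierstrass behaviour at the essential singularity `σ = 0`:
for `F ≠ K` and every `ε > 0`, the image of the punctured disc
`{σ : 0 < ‖σ‖ < ε}` under the Black-Scholes price is dense in `ℂ`. -/
theorem BS_casorati_weierstrass (r F K T : ℝ)
    (hF : 0 < F) (hK : 0 < K) (hT : 0 < T) (hFK : F ≠ K) :
    ∀ ε : ℝ, 0 < ε →
      Dense (BS r F K T '' {σ : ℂ | 0 < ‖σ‖ ∧ ‖σ‖ < ε}) := by
  intro ε hε
  by_contra hdense
  obtain ⟨w, hw⟩ : ∃ w, w ∉ closure (BS r F K T '' {σ : ℂ | 0 < ‖σ‖ ∧ ‖σ‖ < ε}) := by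
    simpa [Dense] using hdense
  obtain ⟨δ, hδ, hball⟩ : ∃ δ > 0, ∀ σ : ℂ, 0 < ‖σ‖ → ‖σ‖ < ε → δ ≤ ‖BS r F K T σ - w‖ := by
    rw [Metric.mem_closure_iff] at hw
    push Not at hw
    obtain ⟨δ, hδ, h⟩ := hw
    refine ⟨δ, hδ, fun σ h1 h2 => ?_⟩
    rw [← dist_eq_norm, dist_comm]
    exact h _ ⟨σ, ⟨h1, h2⟩, rfl⟩
  have hne : ∀ᶠ σ in 𝓝[≠] (0 : ℂ), σ ≠ 0 := self_mem_nhdsWithin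
  have hmero : MeromorphicAt (BS r F K T) 0 := by
    refine meromorphicAt_of_punctured_nhds_avoid_ball (w := w) hδ ?_ ?_
    · filter_upwards [hne] with σ hσ
      exact (hasDerivAt_BS r F K T hF hK hT hσ).differentiableAt
    · filter_upwards [hne, nhdsWithin_le_nhds (Metric.ball_mem_nhds (0 : ℂ) hε)] with σ hσ h
      exact hball σ (norm_pos_iff.2 hσ) (mem_ball_zero_iff.1 h)
  have hL : Real.log (F / K) ≠ 0 :=
    Real.log_ne_zero_of_pos_of_ne_one (div_pos hF hK) fun h => hFK ((div_eq_one_iff_eq hK.ne').1 h)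
  have hc : 0 < Real.log (F / K) ^ 2 / (2 * T) := by positivity
  refine not_meromorphicAt_exp_neg_div_sq hc ?_
  set A : ℂ := (Real.exp (-(r * T)) : ℂ) * (F : ℂ) * ((Real.sqrt (2 * Real.pi))⁻¹ : ℂ) *
    (Real.sqrt T : ℂ) with hA_def
  have hs : (Real.sqrt T : ℂ) ≠ 0 := by exact_mod_cast (Real.sqrt_pos.2 hT).ne'
  have hA : A ≠ 0 := by
    have h1 : (Real.exp (-(r * T)) : ℂ) ≠ 0 := by exact_mod_cast (Real.exp_pos _).ne'
    have h2 : (F : ℂ) ≠ 0 := by exact_mod_cast hF.ne'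
    have h3 : (Real.sqrt (2 * Real.pi) : ℂ) ≠ 0 := by
      exact_mod_cast (Real.sqrt_pos.2 Real.two_pi_pos).ne'
    exact mul_ne_zero (mul_ne_zero (mul_ne_zero h1 h2) (inv_ne_zero h3)) hs
  have hE : AnalyticAt ℂ (fun σ : ℂ =>
      A⁻¹ * Complex.exp ((Real.log (F / K) : ℂ) / 2 + σ ^ 2 * T / 8)) 0 := by
    have : Differentiable ℂ (fun σ : ℂ =>
      A⁻¹ * Complex.exp ((Real.log (F / K) : ℂ) / 2 + σ ^ 2 * T / 8)) := by fun_prop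
    exact this.analyticAt 0
  refine (hmero.deriv.mul hE.meromorphicAt).congr ?_
  filter_upwards [hne] with σ hσ
  have hs2 : (Real.sqrt T : ℂ) ^ 2 = T := by exact_mod_cast Real.sq_sqrt hT.le
  -- Expanding the square: only the term in `σ⁻²` of `d₊² / 2` is singular.
  have hexpo : -((Real.log (F / K) ^ 2 / (2 * T) : ℝ) / σ ^ 2 : ℂ) =
      -(dPlus F K T σ) ^ 2 / 2 + ((Real.log (F / K) : ℂ) / 2 + σ ^ 2 * T / 8) := by
    rw [dPlus]
    push_cast
    rw [← hs2]
    field_simp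
    ring
  rw [Pi.mul_apply, (hasDerivAt_BS r F K T hF hK hT hσ).deriv, ← hA_def, hexpo,
    Complex.exp_add (-(dPlus F K T σ) ^ 2 / 2), mul_mul_mul_comm, mul_inv_cancel₀ hA, one_mul]
end
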